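/- Let (S, σ, τ) be a frame for R and assume that every finitely generated projective R-module is isomorphic to Q ⊗_{S₀} R for some finitely generated projective S₀-module Q. Then every graded S-module M that is finitely generated and projective as an S-module is standard projective: there exists a graded finitely generated projective S₀-module L = ⊕_{i∈ℤ} Lᵢ (each Lᵢ a finitely generated projective S₀-module, almost all zero) and an isomorphism of graded S-modules M ≅ L ⊗_{S₀} S, where L ⊗_{S₀} S carries the grading with (L ⊗_{S₀} S)ₙ = ⊕ᵢ Lᵢ ⊗_{S₀} S_{n−i}. -/

import Mathlib

/-- A (higher) frame. -/
structure Frame (p : ℕ) (S : Type) [CommRing S] where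
  grade : ℤ → AddSubgroup S
  one_mem : (1 : S) ∈ grade 0
  mul_mem : ∀ {m n : ℤ} {a b : S}, a ∈ grade m → b ∈ grade n → a * b ∈ grade (m + n)
  isInternal : DirectSum.IsInternal grade
  σ : S →+* S
  τ : S →+* S
  σ_mem : ∀ s, σ s ∈ grade 0
  τ_mem : ∀ s, τ s ∈ grade 0
  τ_id : ∀ s ∈ grade 0, τ s = s
  τ_bij : ∀ n : ℕ, 1 ≤ n → Set.BijOn τ (grade (-(n : ℤ))) (grade 0)
  t : S
  t_mem : t ∈ grade (-1)
  τ_t : τ t = 1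
  σ_frob : ∀ s ∈ grade 0, ∃ c ∈ grade 0, σ s = s ^ p + (p : S) * c
  σ_t : σ t = (p : S)
  p_jac : ∀ x ∈ grade 0, ∃ y ∈ grade 0, (1 - (p : S) * x) * y = 1

variable {p : ℕ} {S : Type} [CommRing S]

/-- The degree zero subring S₀ of a frame. -/
def Frame.S0 (F : Frame p S) : Subring S where
  carrier := F.grade 0
  mul_mem' {a b} ha hb := by simpa using F.mul_mem ha hb
  one_mem' := F.one_mem
  add_mem' {a b} ha hb := add_mem ha hb
  zero_mem' := zero_mem _
  neg_mem' {a} ha := neg_mem ha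

/-- The ideal tS₁ ⊆ S₀. -/
def Frame.tS1 (F : Frame p S) : Ideal F.S0 where
  carrier := {a | ∃ x ∈ F.grade 1, (a : S) = F.t * x}
  add_mem' := by
    rintro a b ⟨x, hx, hax⟩ ⟨y, hy, hby⟩
    exact ⟨x + y, add_mem hx hy, by push_cast [hax, hby]; ring⟩
  zero_mem' := ⟨0, zero_mem _, by simp⟩
  smul_mem' := by
    rintro c a ⟨x, hx, hax⟩
    refine ⟨(c : S) * x, by simpa using F.mul_mem c.2 hx, ?_⟩
    show ((c * a : F.S0) : S) = _
    push_cast [hax]; ring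

/-- The ring R = S₀/tS₁ of a frame. -/
abbrev Frame.R (F : Frame p S) : Type := F.S0 ⧸ F.tS1

/-- The kernel of ρ : S → R, the graded ideal with K₀ = tS₁ and Kₙ = Sₙ for n ≠ 0. -/
def Frame.kerRho (F : Frame p S) : Ideal S :=
  Ideal.span ({s : S | ∃ x ∈ F.grade 1, s = F.t * x} ∪ ⋃ (n : ℤ) (_ : n ≠ 0), (F.grade n : Set S))


set_option synthInstance.maxHeartbeats 1000000

open scoped TensorProduct

/-- A witness that a finitely generated projective `R`-module `P` (for `R = S₀/tS₁`) lifts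
to a finitely generated projective `S₀`-module `Q`, i.e. `P ≅ Q ⊗_{S₀} R`. -/
structure Frame.LiftWitness (F : Frame p S) (P : Type) [AddCommGroup P] [Module F.R P] where
  Q : Type
  [instAddCommGroup : AddCommGroup Q]
  [instModule : Module F.S0 Q]
  finite : Module.Finite F.S0 Q
  projective : Module.Projective F.S0 Q
  equiv : (TensorProduct F.S0 F.R Q) ≃ₗ[F.R] P

attribute [instance] Frame.LiftWitness.instAddCommGroup Frame.LiftWitness.instModule

/-- A witness that a graded `S`-module `M` (with grading `ℳ`) is standard projective:
a graded finitely generated projective `S₀`-module `L = ⊕ᵢ Lᵢ` together with an isomorphism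
of graded `S`-modules `M ≅ L ⊗_{S₀} S`, where `L ⊗_{S₀} S` carries the grading with
`(L ⊗_{S₀} S)ₙ = ⊕ᵢ Lᵢ ⊗_{S₀} S_{n−i}`. -/
structure Frame.StandardProjectiveWitness (F : Frame p S)
    (M : Type) [AddCommGroup M] [Module S M] (ℳ : ℤ → AddSubgroup M) where
  L : Type
  [instAddCommGroup : AddCommGroup L]
  [instModule : Module F.S0 L]
  /-- the grading `L = ⊕ᵢ Lᵢ` by `S₀`-submodules -/
  Λ : ℤ → Submodule F.S0 L
  internal : DirectSum.IsInternal Λ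
  /-- almost all graded pieces vanish -/
  finiteSupport : {i : ℤ | Λ i ≠ ⊥}.Finite
  finite : Module.Finite F.S0 L
  projective : Module.Projective F.S0 L
  /-- the isomorphism of `S`-modules `L ⊗_{S₀} S ≅ M` -/
  equiv : (TensorProduct F.S0 S L) ≃ₗ[S] M
  /-- `equiv` is an isomorphism of graded modules, where `(L ⊗_{S₀} S)ₙ` is the subgroup
  generated by the pure tensors `s ⊗ y` with `s ∈ S_{n−i}`, `y ∈ Lᵢ` -/
  graded : ∀ (n : ℤ) (x : M), x ∈ ℳ n ↔
      equiv.symm x ∈ AddSubgroup.closure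
        {w : TensorProduct F.S0 S L |
          ∃ (i : ℤ) (s : S) (y : L), s ∈ F.grade (n - i) ∧ y ∈ Λ i ∧ w = s ⊗ₜ[F.S0] y}

/-!
Reducing a graded `S`-module `M` along the ring homomorphism `ρ : S → R`, which is the quotient map
in degree zero and vanishes elsewhere, gives an `R`-module that still decomposes as `⨁ Pᵢ`, since
only `S₀` acts nontrivially. Finitely many of the finitely generated projective modules `Pᵢ` are
nonzero. Lift `Pᵢ` to a projective `S₀`-module `Lᵢ`; by projectivity `Lᵢ → Pᵢ` lifts to a map
`Lᵢ → Mᵢ`, and together these give a graded map `S ⊗ L → M` which is an isomorphism modulo `ker ρ`.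

To conclude that it is an isomorphism one needs a graded Nakayama lemma. The ideal `ker ρ` need not
lie in the Jacobson radical of `S`, but for graded modules it is enough that `1 - s₀` is a unit for
all `s ∈ ker ρ`, i.e. that `tS₁` lies in the Jacobson radical of `S₀`. This holds because
`σ(t x) = p σ(x)` and `σ(a) ≡ aᵖ` modulo `p`, so that `aᵖ ∈ p S₀` for every `a ∈ tS₁`.
-/

section GradedNakayama

open DirectSum SetLike

variable {ι B M σ τ : Type*} [DecidableEq ι]

section Semiring

variable [Semiring B] [AddCommMonoid M] [Module B M] [SetLike τ M] [AddSubmonoidClass τ M]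
  (ℳ : ι → τ) [Decomposition ℳ]

theorem span_isHomogeneousElem_eq {N : Submodule B M} (hN : N.IsHomogeneous ℳ) :
    Submodule.span B {x | x ∈ N ∧ IsHomogeneousElem ℳ x} = N := by
  classical
  refine le_antisymm (Submodule.span_le.2 fun x hx ↦ hx.1) fun x hx ↦ ?_
  rw [← sum_support_decompose ℳ x]
  exact sum_mem fun i _ ↦ Submodule.subset_span ⟨hN i hx, i, coe_mem _⟩

theorem exists_finset_isHomogeneousElem_span_eq {N : Submodule B M} (hN : N.IsHomogeneous ℳ)
    (hfg : N.FG) :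
    ∃ s : Finset M, (∀ x ∈ s, IsHomogeneousElem ℳ x) ∧ Submodule.span B (s : Set M) = N := by
  have hspan := span_isHomogeneousElem_eq ℳ hN
  rw [← hspan, Submodule.fg_span_iff_fg_span_finset_subset] at hfg
  obtain ⟨s, hs, hs'⟩ := hfg
  exact ⟨s, fun x hx ↦ (hs hx).2, by rw [← hs', hspan]⟩

theorem isHomogeneous_sup {N N' : Submodule B M} (hN : N.IsHomogeneous ℳ)
    (hN' : N'.IsHomogeneous ℳ) : (N ⊔ N').IsHomogeneous ℳ := by
  intro n x hx
  obtain ⟨y, hy, z, hz, rfl⟩ := Submodule.mem_sup.1 hx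
  rw [decompose_add, DirectSum.add_apply, AddMemClass.coe_add]
  exact Submodule.add_mem_sup (hN n hy) (hN' n hz)

variable [AddGroup ι] [SetLike σ B] (𝒜 : ι → σ)

theorem coe_decompose_smul_of_mem_left [GradedSMul 𝒜 ℳ] {k : ι} {s : B} (hs : s ∈ 𝒜 k) (x : M)
    (n : ι) :
    (decompose ℳ (s • x) (k + n) : M) = s • (decompose ℳ x n : M) := by
  induction x using Decomposition.inductionOn ℳ with
  | zero => simp
  | @homogeneous m x =>
    have hsx : s • (x : M) ∈ ℳ (k + m) := GradedSMul.smul_mem hs x.2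
    obtain rfl | hmn := eq_or_ne m n
    · rw [decompose_of_mem_same ℳ hsx, decompose_of_mem_same ℳ x.2]
    · rw [decompose_of_mem_ne ℳ hsx (by simpa using hmn), decompose_of_mem_ne ℳ x.2 hmn, smul_zero]
  | add x y hx hy =>
    simp only [smul_add, decompose_add, DirectSum.add_apply, AddMemClass.coe_add, hx, hy]

variable [AddSubmonoidClass σ B] [GradedRing 𝒜]

theorem coe_decompose_smul_of_mem_right [GradedSMul 𝒜 ℳ] {d : ι} {x : M} (hx : x ∈ ℳ d) (s : B) :
    (decompose ℳ (s • x) d : M) = (decompose 𝒜 s 0 : B) • x := by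
  induction s using Decomposition.inductionOn 𝒜 with
  | zero => simp
  | @homogeneous m s =>
    have hsx : (s : B) • x ∈ ℳ (m + d) := GradedSMul.smul_mem s.2 hx
    obtain rfl | hm := eq_or_ne m 0
    · rw [zero_add] at hsx
      rw [decompose_of_mem_same ℳ hsx, decompose_of_mem_same 𝒜 s.2]
    · rw [decompose_of_mem_ne ℳ hsx (by simpa using hm), decompose_of_mem_ne 𝒜 s.2 hm, zero_smul]
  | add s t hs ht =>
    simp only [add_smul, decompose_add, DirectSum.add_apply, AddMemClass.coe_add, hs, ht]

theorem isHomogeneous_span [GradedSMul 𝒜 ℳ] {s : Set M} (hs : ∀ x ∈ s, IsHomogeneousElem ℳ x) :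
    (Submodule.span B s).IsHomogeneous ℳ := by
  intro n x hx
  induction hx using Submodule.span_induction generalizing n with
  | mem x hx =>
    obtain ⟨m, hm⟩ := hs x hx
    obtain rfl | hmn := eq_or_ne m n
    · rw [decompose_of_mem_same ℳ hm]
      exact Submodule.subset_span hx
    · rw [decompose_of_mem_ne ℳ hm hmn]
      exact zero_mem _
  | zero => simp
  | add x y _ _ hx hy => simpa using add_mem (hx n) (hy n)
  | smul a x _ hx =>
    induction a using Decomposition.inductionOn 𝒜 generalizing n with
    | zero => simp
    | @homogeneous k a =>
      have h := coe_decompose_smul_of_mem_left ℳ 𝒜 a.2 x (-k + n)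
      rw [add_neg_cancel_left] at h
      exact h ▸ Submodule.smul_mem _ _ (hx _)
    | add a b ha hb => simpa [add_smul] using add_mem (ha n) (hb n)

end Semiring

variable [AddGroup ι] [CommRing B] [SetLike σ B] [AddSubgroupClass σ B] (𝒜 : ι → σ)
  [GradedRing 𝒜] [AddCommGroup M] [Module B M] [SetLike τ M] [AddSubmonoidClass τ M]
  (ℳ : ι → τ) [Decomposition ℳ] [GradedSMul 𝒜 ℳ]

theorem mem_of_mem_sup_smul_span_singleton {I : Ideal B}
    (hI : ∀ s ∈ I, IsUnit (1 - (decompose 𝒜 s 0 : B))) {N : Submodule B M}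
    (hN : N.IsHomogeneous ℳ) {a : M} (ha : IsHomogeneousElem ℳ a)
    (h : a ∈ N ⊔ I • Submodule.span B {a}) : a ∈ N := by
  obtain ⟨d, had⟩ := ha
  obtain ⟨x, hx, y, hy, hxy⟩ := Submodule.mem_sup.1 h
  obtain ⟨k, hk, rfl⟩ := Submodule.mem_smul_span_singleton.1 hy
  have hka : (1 - k) • a ∈ N := by
    rwa [sub_smul, one_smul, ← eq_sub_of_add_eq hxy]
  -- In degree `d` this reads `(1 - k₀) • a ∈ N`, so only `k₀` has to be controlled.
  have hcomp := hN d hka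
  rw [coe_decompose_smul_of_mem_right ℳ 𝒜 had, decompose_sub, DirectSum.sub_apply,
    AddSubgroupClass.coe_sub, decompose_of_mem_same 𝒜 (GradedOne.one_mem)] at hcomp
  exact (Submodule.smul_mem_iff_of_isUnit N (hI k hk)).1 hcomp

theorem le_of_le_sup_smul_of_isUnit {I : Ideal B}
    (hI : ∀ s ∈ I, IsUnit (1 - (decompose 𝒜 s 0 : B))) {N N' : Submodule B M}
    (hN : N.IsHomogeneous ℳ) (hN' : N'.IsHomogeneous ℳ) (hfg : N'.FG) (h : N' ≤ N ⊔ I • N') :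
    N' ≤ N := by
  classical
  obtain ⟨s, hs, rfl⟩ := exists_finset_isHomogeneousElem_span_eq ℳ hN' hfg
  clear hfg hN'
  induction s using Finset.induction_on with
  | empty => simp
  | insert a s _ ih =>
    obtain ⟨ha, hs⟩ := (Finset.forall_mem_insert _ _ _).1 hs
    rw [Finset.coe_insert, Submodule.span_insert] at h ⊢
    rw [Submodule.smul_sup, sup_le_iff] at h
    set T := Submodule.span B (s : Set M)
    have haT : Submodule.span B {a} ≤ N ⊔ T := by
      rw [Submodule.span_singleton_le_iff_mem]
      refine mem_of_mem_sup_smul_span_singleton 𝒜 ℳ hI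
        (isHomogeneous_sup ℳ hN (isHomogeneous_span ℳ 𝒜 hs)) ha ?_
      refine (h.1.trans ?_) (Submodule.mem_span_singleton_self a)
      rw [sup_assoc, sup_comm T]
      gcongr
      exact Submodule.smul_le_right
    have hTN : T ≤ N := by
      refine ih hs (h.2.trans (sup_le le_sup_left (sup_le ?_ le_sup_right)))
      calc I • Submodule.span B {a} ≤ I • (N ⊔ T) := by gcongr
        _ = I • N ⊔ I • T := Submodule.smul_sup _ _ _
        _ ≤ N ⊔ I • T := by gcongr; exact Submodule.smul_le_right
    exact sup_le (haT.trans (sup_le le_rfl hTN)) hTN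

end GradedNakayama

section HomogeneousMap

open DirectSum

variable {ι B M N σ τ : Type*} [DecidableEq ι] [Ring B]
  [AddCommGroup M] [Module B M] [SetLike σ M] [AddSubmonoidClass σ M] {ℳ : ι → σ}
  [Decomposition ℳ] [AddCommGroup N] [Module B N] [SetLike τ N] [AddSubmonoidClass τ N]
  {𝒩 : ι → τ} [Decomposition 𝒩] {f : N →ₗ[B] M}

theorem decompose_map_of_forall_mem (hf : ∀ n, ∀ x ∈ 𝒩 n, f x ∈ ℳ n) (x : N) (n : ι) :
    (decompose ℳ (f x) n : M) = f (decompose 𝒩 x n) := by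
  induction x using Decomposition.inductionOn 𝒩 with
  | zero => simp
  | @homogeneous m x =>
    obtain rfl | hmn := eq_or_ne m n
    · rw [decompose_of_mem_same ℳ (hf _ _ x.2), decompose_of_mem_same 𝒩 x.2]
    · rw [decompose_of_mem_ne ℳ (hf _ _ x.2) hmn, decompose_of_mem_ne 𝒩 x.2 hmn, map_zero]
  | add x y hx hy => simp [hx, hy]

theorem isHomogeneous_range (hf : ∀ n, ∀ x ∈ 𝒩 n, f x ∈ ℳ n) :
    (LinearMap.range f).IsHomogeneous ℳ := by
  rintro n _ ⟨x, rfl⟩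
  exact ⟨decompose 𝒩 x n, (decompose_map_of_forall_mem hf x n).symm⟩

theorem isHomogeneous_ker (hf : ∀ n, ∀ x ∈ 𝒩 n, f x ∈ ℳ n) :
    (LinearMap.ker f).IsHomogeneous 𝒩 := by
  intro n x hx
  rw [LinearMap.mem_ker, ← decompose_map_of_forall_mem hf, LinearMap.mem_ker.1 hx,
    decompose_zero, DirectSum.zero_apply, ZeroMemClass.coe_zero]

theorem map_mem_iff_of_injective (hf : ∀ n, ∀ x ∈ 𝒩 n, f x ∈ ℳ n) (hinj : Function.Injective f)
    {n : ι} {x : N} : f x ∈ ℳ n ↔ x ∈ 𝒩 n := by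
  refine ⟨fun h ↦ ?_, hf n x⟩
  have hx : f (decompose 𝒩 x n) = f x := by
    rw [← decompose_map_of_forall_mem hf, decompose_of_mem_same ℳ h]
  exact hinj hx ▸ SetLike.coe_mem _

end HomogeneousMap

section BaseChange

open DirectSum TensorProduct

theorem one_tmul_eq_zero_iff {B M R : Type*} [CommRing B] [AddCommGroup M] [Module B M]
    [CommRing R] [Algebra B R] (hsurj : Function.Surjective (algebraMap B R)) (x : M) :
    (1 : R) ⊗ₜ[B] x = 0 ↔ x ∈ RingHom.ker (algebraMap B R) • (⊤ : Submodule B M) := by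
  let e : (B ⧸ RingHom.ker (algebraMap B R)) ≃ₗ[B] R :=
    (Algebra.linearMap B R).quotKerEquivOfSurjective hsurj
  have he : e 1 = 1 := map_one (algebraMap B R)
  rw [← LinearMap.ker_tensorProductMk, LinearMap.mem_ker, TensorProduct.mk_apply,
    ← (TensorProduct.congr e (.refl B M)).map_eq_zero_iff, TensorProduct.congr_tmul, he,
    LinearEquiv.refl_apply]

variable {ι B M N R σ τ υ : Type*} [DecidableEq ι] [AddGroup ι] [CommRing B] [SetLike σ B]
  [AddSubgroupClass σ B] (𝒜 : ι → σ) [GradedRing 𝒜]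
  [AddCommGroup M] [Module B M] [SetLike τ M] [AddSubmonoidClass τ M]
  (ℳ : ι → τ) [Decomposition ℳ]
  [AddCommGroup N] [Module B N] [SetLike υ N] [AddSubmonoidClass υ N]
  (𝒩 : ι → υ) [Decomposition 𝒩] {f : N →ₗ[B] M} [CommRing R] [Algebra B R]

theorem surjective_of_baseChange_surjective [SetLike.GradedSMul 𝒜 ℳ] [Module.Finite B M]
    (hsurj : Function.Surjective (algebraMap B R))
    (hunit : ∀ s ∈ RingHom.ker (algebraMap B R), IsUnit (1 - (decompose 𝒜 s 0 : B)))
    (hf : ∀ n, ∀ x ∈ 𝒩 n, f x ∈ ℳ n) (hfR : Function.Surjective (f.baseChange R)) :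
    Function.Surjective f := by
  rw [← LinearMap.range_eq_top, ← top_le_iff]
  have htop : (⊤ : Submodule B M).IsHomogeneous ℳ := fun _ _ _ ↦ Submodule.mem_top
  refine le_of_le_sup_smul_of_isUnit 𝒜 ℳ hunit (isHomogeneous_range hf) htop
    Module.Finite.fg_top fun m _ ↦ ?_
  obtain ⟨w, hw⟩ := hfR (1 ⊗ₜ m)
  obtain ⟨x, rfl⟩ := TensorProduct.mk_surjective B N R hsurj w
  have hker : (1 : R) ⊗ₜ[B] (m - f x) = 0 := by
    rw [TensorProduct.tmul_sub, ← hw, TensorProduct.mk_apply, LinearMap.baseChange_tmul, sub_self]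
  rw [one_tmul_eq_zero_iff hsurj] at hker
  exact Submodule.mem_sup.2 ⟨f x, ⟨x, rfl⟩, m - f x, hker, add_sub_cancel _ _⟩

theorem injective_of_baseChange_injective [SetLike.GradedSMul 𝒜 𝒩] [Module.Finite B N]
    [Module.Projective B M] (hsurj : Function.Surjective (algebraMap B R))
    (hunit : ∀ s ∈ RingHom.ker (algebraMap B R), IsUnit (1 - (decompose 𝒜 s 0 : B)))
    (hf : ∀ n, ∀ x ∈ 𝒩 n, f x ∈ ℳ n) (hf' : Function.Surjective f)
    (hfR : Function.Injective (f.baseChange R)) :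
    Function.Injective f := by
  rw [← LinearMap.ker_eq_bot, ← le_bot_iff]
  obtain ⟨g, hg⟩ := Module.projective_lifting_property f LinearMap.id hf'
  let r : N →ₗ[B] N := LinearMap.id - g ∘ₗ f
  have hfg (x : M) : f (g x) = x := LinearMap.congr_fun hg x
  have hr : LinearMap.range r = LinearMap.ker f := by
    refine le_antisymm ?_ fun x hx ↦ ⟨x, by simp [r, LinearMap.mem_ker.1 hx]⟩
    rintro _ ⟨x, rfl⟩
    simp [r, hfg]
  have hker : (LinearMap.ker f).FG := by
    rw [← hr, ← Submodule.map_top]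
    exact Module.Finite.fg_top.map r
  have hbot : (⊥ : Submodule B N).IsHomogeneous 𝒩 := by
    rintro n x rfl
    simp
  refine le_of_le_sup_smul_of_isUnit 𝒜 𝒩 hunit hbot (isHomogeneous_ker hf) hker fun x hx ↦ ?_
  have hx0 : (1 : R) ⊗ₜ[B] x = 0 := hfR <| by
    rw [LinearMap.baseChange_tmul, LinearMap.mem_ker.1 hx, TensorProduct.tmul_zero, map_zero]
  rw [one_tmul_eq_zero_iff hsurj] at hx0
  have hrx : r x = x := by simp [r, LinearMap.mem_ker.1 hx]
  rw [bot_sup_eq, ← hr, ← Submodule.map_top, ← Submodule.map_smul'', ← hrx]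
  exact Submodule.mem_map_of_mem hx0

end BaseChange

section Coaction

open DirectSum Finsupp TensorProduct

variable {ι : Type*}

theorem isInternal_of_coaction [DecidableEq ι] {M σ : Type*} [AddCommMonoid M] [SetLike σ M]
    [AddSubmonoidClass σ M] (ℳ : ι → σ) (c : M →+ (ι →₀ M))
    (hc : ∀ n, ∀ x ∈ ℳ n, c x = single n x)
    (hclosure : AddSubmonoid.closure (⋃ n, (ℳ n : Set M)) = ⊤) : IsInternal ℳ := by
  have hcoeff (n : ι) (z : ⨁ i, ℳ i) : c (DirectSum.coeAddMonoidHom ℳ z) n = z n := by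
    induction z using DirectSum.induction_on with
    | zero => simp
    | of i x => rw [coeAddMonoidHom_of, hc i x x.2, coe_of_apply, single_apply,
        apply_ite Subtype.val, ZeroMemClass.coe_zero]
    | add y z hy hz => simp [hy, hz]
  refine ⟨fun y z hyz ↦ DFinsupp.ext fun n ↦ ?_, fun x ↦ ?_⟩
  · exact Subtype.ext (by rw [← hcoeff, ← hcoeff, hyz])
  · suffices AddMonoidHom.mrange (DirectSum.coeAddMonoidHom ℳ) = ⊤ from
      AddMonoidHom.mrange_eq_top.1 this x
    rw [eq_top_iff, ← hclosure, AddSubmonoid.closure_le, Set.iUnion_subset_iff]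
    exact fun n y hy ↦ ⟨of _ n ⟨y, hy⟩, coeAddMonoidHom_of ..⟩

section Decomposition

variable [DecidableEq ι] {A M : Type*} [Semiring A] [AddCommMonoid M] [Module A M]
  (ℳ : ι → Submodule A M) [Decomposition ℳ]

/-- The coaction `x ↦ ∑ xᵢ tⁱ` attached to a decomposition `M = ⨁ ℳᵢ`, where `M[t]` is encoded
as `ι →₀ M`. -/
noncomputable def gradedCoaction : M →ₗ[A] (ι →₀ M) :=
  DirectSum.toModule A ι _ (fun i ↦ lsingle i ∘ₗ (ℳ i).subtype) ∘ₗ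
    (decomposeLinearEquiv ℳ).toLinearMap

theorem gradedCoaction_of_mem {i : ι} {x : M} (hx : x ∈ ℳ i) :
    gradedCoaction ℳ x = single i x := by
  lift x to ℳ i using hx
  simp [gradedCoaction]

end Decomposition

section BaseChangeGrading

variable [AddGroup ι] {A B L : Type*} [CommRing A] [CommRing B] [Algebra A B]
  [AddCommGroup L] [Module A L] (𝒜 : ι → Submodule A B) (Λ : ι → Submodule A L)

/-- The grading of `B ⊗[A] L` with `n`-th piece `⨁ᵢ 𝒜ₙ₋ᵢ ⊗ Λᵢ`, encoded as the subgroup generated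
by the homogeneous pure tensors of total degree `n`. -/
def baseChangeGrading (n : ι) : AddSubgroup (B ⊗[A] L) :=
  AddSubgroup.closure {w | ∃ (i : ι) (s : B) (y : L), s ∈ 𝒜 (n - i) ∧ y ∈ Λ i ∧ w = s ⊗ₜ[A] y}

variable {𝒜 Λ} in
theorem tmul_mem_baseChangeGrading {m n : ι} {s : B} {y : L} (hs : s ∈ 𝒜 m) (hy : y ∈ Λ n) :
    s ⊗ₜ[A] y ∈ baseChangeGrading 𝒜 Λ (m + n) :=
  AddSubgroup.subset_closure ⟨n, s, y, by rwa [add_sub_cancel_right], hy, rfl⟩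

instance baseChangeGrading.gradedSMul [DecidableEq ι] [GradedAlgebra 𝒜] :
    SetLike.GradedSMul 𝒜 (baseChangeGrading 𝒜 Λ) where
  smul_mem {m n a x} ha hx := by
    induction hx using AddSubgroup.closure_induction with
    | mem x hx =>
      obtain ⟨i, s, y, hs, hy, rfl⟩ := hx
      have h := tmul_mem_baseChangeGrading (SetLike.mul_mem_graded ha hs) hy
      rwa [add_assoc, sub_add_cancel] at h
    | zero => simp
    | add x y _ _ hx hy => simpa using add_mem hx hy
    | neg x _ hx => simpa using neg_mem hx

variable [DecidableEq ι] [GradedAlgebra 𝒜] [Decomposition Λ]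

theorem isInternal_baseChangeGrading : IsInternal (baseChangeGrading 𝒜 Λ) := by
  let c : B ⊗[A] L →ₗ[A] (ι →₀ B ⊗[A] L) :=
    Finsupp.lmapDomain _ A (fun p : ι × ι ↦ p.1 + p.2) ∘ₗ
      (finsuppTensorFinsupp A A B L ι ι).toLinearMap ∘ₗ
        TensorProduct.map (gradedCoaction 𝒜) (gradedCoaction Λ)
  refine isInternal_of_coaction _ c.toAddMonoidHom (fun n x hx ↦ ?_)
    ((AddSubmonoid.eq_top_iff' _).2 fun x ↦ ?_)
  · induction hx using AddSubgroup.closure_induction with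
    | mem x hx =>
      obtain ⟨i, s, y, hs, hy, rfl⟩ := hx
      simp [c, gradedCoaction_of_mem 𝒜 hs, gradedCoaction_of_mem Λ hy,
        finsuppTensorFinsupp_single]
    | zero => simp
    | add x y _ _ hx hy => rw [map_add, hx, hy, single_add]
    | neg x _ hx => rw [map_neg, hx, single_neg]
  · induction x using TensorProduct.induction_on with
    | zero => exact zero_mem _
    | add x y hx hy => exact add_mem hx hy
    | tmul s y =>
      induction s using Decomposition.inductionOn 𝒜 with
      | zero => simp
      | add s t hs ht => rw [add_tmul]; exact add_mem hs ht
      | @homogeneous m s =>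
        induction y using Decomposition.inductionOn Λ with
        | zero => simp
        | add y z hy hz => rw [tmul_add]; exact add_mem hy hz
        | @homogeneous n y =>
          exact AddSubmonoid.subset_closure
            (Set.mem_iUnion.2 ⟨m + n, tmul_mem_baseChangeGrading s.2 y.2⟩)

end BaseChangeGrading

section PiGrading

variable {κ A : Type*} {Q : κ → Type*} [Semiring A] [∀ i, AddCommMonoid (Q i)]
  [∀ i, Module A (Q i)]

variable (A Q) in
/-- The grading of `∏ᵢ Q i` in which `Q i` is placed in degree `d i`. -/
def piGrading (d : κ → ι) (n : ι) : Submodule A (∀ i, Q i) :=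
  Submodule.pi {i | d i ≠ n} fun _ ↦ ⊥

theorem single_mem_piGrading [DecidableEq κ] (d : κ → ι) (i : κ) (q : Q i) :
    Pi.single i q ∈ piGrading A Q d (d i) := by
  intro j hj
  exact Pi.single_eq_of_ne (by rintro rfl; exact hj rfl) q

theorem isInternal_piGrading [DecidableEq ι] [Finite κ] (d : κ → ι) :
    IsInternal (piGrading A Q d) := by
  classical
  have := Fintype.ofFinite κ
  let c : (∀ i, Q i) →+ (ι →₀ ∀ i, Q i) :=
    ∑ i, (singleAddHom (d i)).comp ((AddMonoidHom.single Q i).comp (Pi.evalAddMonoidHom Q i))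
  refine isInternal_of_coaction _ c (fun n y hy ↦ ?_) ((AddSubmonoid.eq_top_iff' _).2 fun y ↦ ?_)
  · have hdeg (i : κ) : single (d i) (Pi.single i (y i)) = single n (Pi.single i (y i)) := by
      by_cases hi : d i = n
      · rw [hi]
      · rw [show y i = 0 from hy i hi, Pi.single_zero, single_zero, single_zero]
    simp [c, hdeg, ← single_finsetSum, Finset.univ_sum_single]
  · rw [← Finset.univ_sum_single y]
    exact sum_mem fun i _ ↦ AddSubmonoid.subset_closure
      (Set.mem_iUnion.2 ⟨d i, single_mem_piGrading d i (y i)⟩)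

theorem finite_setOf_piGrading_ne_bot [Finite κ] (d : κ → ι) :
    {n | piGrading A Q d n ≠ ⊥}.Finite := by
  refine (Set.finite_range d).subset fun n hn ↦ ?_
  by_contra hd
  refine hn ((Submodule.eq_bot_iff _).2 fun y hy ↦ funext fun i ↦ hy i ?_)
  exact fun hi ↦ hd ⟨i, hi⟩

end PiGrading

end Coaction

section Pieces

open DirectSum TensorProduct

section Projective

variable {ι R P : Type*} [DecidableEq ι] [Semiring R] [AddCommMonoid P] [Module R P]
  {𝒬 : ι → Submodule R P}

theorem exists_leftInverse_subtype_of_isInternal (h : IsInternal 𝒬) (i : ι) :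
    ∃ π : P →ₗ[R] 𝒬 i, π ∘ₗ (𝒬 i).subtype = LinearMap.id := by
  let _ := h.chooseDecomposition
  refine ⟨DirectSum.component R ι _ i ∘ₗ (decomposeLinearEquiv 𝒬).toLinearMap, ?_⟩
  ext x
  simp

theorem projective_of_isInternal [Module.Projective R P] (h : IsInternal 𝒬) (i : ι) :
    Module.Projective R (𝒬 i) :=
  have ⟨π, hπ⟩ := exists_leftInverse_subtype_of_isInternal h i
  .of_split _ π hπ

theorem finite_of_isInternal [Module.Finite R P] (h : IsInternal 𝒬) (i : ι) :
    Module.Finite R (𝒬 i) :=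
  have ⟨π, hπ⟩ := exists_leftInverse_subtype_of_isInternal h i
  .of_surjective π fun x ↦ ⟨x, LinearMap.congr_fun hπ x⟩

end Projective

theorem exists_finset_isInternal {ι R P : Type*} [DecidableEq ι] [Ring R] [AddCommGroup P]
    [Module R P] [Module.Finite R P] {𝒬 : ι → Submodule R P} (h : IsInternal 𝒬) :
    ∃ D : Finset ι, IsInternal fun i : D ↦ 𝒬 i := by
  have htop : IsCompactElement (⊤ : Submodule R P) :=
    (Submodule.fg_iff_compact _).1 Module.Finite.fg_top
  obtain ⟨D, hD⟩ := CompleteLattice.IsCompactElement.exists_finset_of_le_iSup _ htop 𝒬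
    h.submodule_iSup_eq_top.ge
  refine ⟨D, isInternal_submodule_of_iSupIndep_of_iSup_eq_top
    (h.submodule_iSupIndep.comp Subtype.val_injective) (top_le_iff.1 (hD.trans ?_))⟩
  exact iSup₂_le fun i hi ↦ le_iSup (fun i : D ↦ 𝒬 i) ⟨i, hi⟩

theorem algebraMap_surjective_of_isScalarTower {A B R : Type*} [CommSemiring A] [CommSemiring B]
    [Semiring R] [Algebra A B] [Algebra A R] [Algebra B R] [IsScalarTower A B R]
    (hsurj : Function.Surjective (algebraMap A R)) : Function.Surjective (algebraMap B R) :=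
  .of_comp (g := algebraMap A B) (by rwa [← RingHom.coe_comp, ← IsScalarTower.algebraMap_eq])

variable {ι A B M R : Type*} [CommRing A] [CommRing B] [Algebra A B] [AddCommGroup M]
  [Module A M] [Module B M] [IsScalarTower A B M]
  [CommRing R] [Algebra A R] [Algebra B R] [IsScalarTower A B R]

section

variable (B R) (ℳ : ι → Submodule A M) (i : ι)

/-- The canonical map `R ⊗[A] ℳᵢ → R ⊗[B] M`. -/
noncomputable def pieceMap : R ⊗[A] ℳ i →ₗ[R] R ⊗[B] M :=
  ((TensorProduct.mk B R M 1).restrictScalars A ∘ₗ (ℳ i).subtype).liftBaseChange R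

variable {ℳ i} in
theorem pieceMap_one_tmul (m : ℳ i) : pieceMap B R ℳ i (1 ⊗ₜ m) = 1 ⊗ₜ (m : M) := by
  simp [pieceMap]

/-- The `i`-th piece of `R ⊗[B] M`: the image of `R ⊗[A] ℳᵢ`. When `R` is concentrated in degree
zero this is a grading of `R ⊗[B] M`. -/
noncomputable def baseChangePiece : Submodule R (R ⊗[B] M) :=
  LinearMap.range (pieceMap B R ℳ i)

end

theorem mem_baseChangePiece_iff (hsurj : Function.Surjective (algebraMap A R))
    {ℳ : ι → Submodule A M} {i : ι} {w : R ⊗[B] M} :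
    w ∈ baseChangePiece B R ℳ i ↔ ∃ m ∈ ℳ i, 1 ⊗ₜ m = w := by
  constructor
  · rintro ⟨z, rfl⟩
    obtain ⟨m, rfl⟩ := TensorProduct.mk_surjective A (ℳ i) R hsurj z
    exact ⟨m, m.2, (pieceMap_one_tmul B R m).symm⟩
  · rintro ⟨m, hm, rfl⟩
    exact ⟨1 ⊗ₜ ⟨m, hm⟩, pieceMap_one_tmul B R _⟩

variable [DecidableEq ι] [AddGroup ι] (𝒜 : ι → Submodule A B) [GradedAlgebra 𝒜]
  (ℳ : ι → Submodule A M) [Decomposition ℳ] [SetLike.GradedSMul 𝒜 ℳ]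

theorem exists_baseChangeCoaction (hkill : ∀ n ≠ 0, ∀ s ∈ 𝒜 n, algebraMap B R s = 0) :
    ∃ c : R ⊗[B] M →ₗ[R] (ι →₀ R ⊗[B] M),
      ∀ i, ∀ m ∈ ℳ i, c (1 ⊗ₜ m) = Finsupp.single i (1 ⊗ₜ m) := by
  let c : M →ₗ[A] (ι →₀ R ⊗[B] M) :=
    Finsupp.mapRange.linearMap ((TensorProduct.mk B R M 1).restrictScalars A) ∘ₗ gradedCoaction ℳ
  have hc {i : ι} {m : M} (hm : m ∈ ℳ i) : c m = Finsupp.single i (1 ⊗ₜ m) := by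
    simp [c, gradedCoaction_of_mem ℳ hm]
  have hsmul (s : B) (m : M) : c (s • m) = s • c m := by
    induction s using Decomposition.inductionOn 𝒜 with
    | zero => simp
    | add s t hs ht => rw [add_smul, map_add, hs, ht, add_smul]
    | @homogeneous k s =>
      induction m using Decomposition.inductionOn ℳ with
      | zero => simp
      | add m m' hm hm' => rw [smul_add, map_add, hm, hm', map_add, smul_add]
      | @homogeneous i m =>
        rw [hc m.2, hc (SetLike.GradedSMul.smul_mem s.2 m.2), Finsupp.smul_single,
          TensorProduct.tmul_smul]
        obtain rfl | hk := eq_or_ne k 0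
        · rw [zero_vadd]
        · have hs : (s : B) • (1 : R) ⊗ₜ[B] (m : M) = 0 := by
            rw [TensorProduct.smul_tmul', Algebra.smul_def, hkill k hk s s.2, zero_mul,
              TensorProduct.zero_tmul]
          rw [hs, Finsupp.single_zero, Finsupp.single_zero]
  refine ⟨LinearMap.liftBaseChange R { c with map_smul' := hsmul }, fun i m hm ↦ ?_⟩
  rw [LinearMap.liftBaseChange_one_tmul]
  exact hc hm

theorem isInternal_baseChangePiece (hsurj : Function.Surjective (algebraMap A R))
    (hkill : ∀ n ≠ 0, ∀ s ∈ 𝒜 n, algebraMap B R s = 0) :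
    IsInternal (baseChangePiece B R ℳ) := by
  obtain ⟨c, hc⟩ := exists_baseChangeCoaction (R := R) 𝒜 ℳ hkill
  refine isInternal_of_coaction _ c.toAddMonoidHom (fun n w hw ↦ ?_)
    ((AddSubmonoid.eq_top_iff' _).2 fun w ↦ ?_)
  · obtain ⟨m, hm, rfl⟩ := (mem_baseChangePiece_iff hsurj).1 hw
    exact hc n m hm
  · obtain ⟨m, rfl⟩ := TensorProduct.mk_surjective B M R
      (algebraMap_surjective_of_isScalarTower hsurj) w
    induction m using Decomposition.inductionOn ℳ with
    | zero => simp
    | add m m' hm hm' => rw [map_add]; exact add_mem hm hm'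
    | @homogeneous i m =>
      exact AddSubmonoid.subset_closure
        (Set.mem_iUnion.2 ⟨i, (mem_baseChangePiece_iff hsurj).2 ⟨m, m.2, rfl⟩⟩)

end Pieces

section Lifting

open DirectSum TensorProduct

variable {ι A B M R : Type*} [CommRing A] [CommRing B] [Algebra A B] [AddCommGroup M]
  [Module A M] [Module B M] [IsScalarTower A B M]

theorem liftBaseChange_mem_of_mem_baseChangeGrading [AddGroup ι] {L : Type*} [AddCommGroup L]
    [Module A L] {𝒜 : ι → Submodule A B} {Λ : ι → Submodule A L} {ℳ : ι → Submodule A M}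
    [SetLike.GradedSMul 𝒜 ℳ] {g : L →ₗ[A] M} (hg : ∀ n, ∀ y ∈ Λ n, g y ∈ ℳ n) {n : ι}
    {w : B ⊗[A] L} (hw : w ∈ baseChangeGrading 𝒜 Λ n) : g.liftBaseChange B w ∈ ℳ n := by
  induction hw using AddSubgroup.closure_induction with
  | mem w hw =>
    obtain ⟨i, s, y, hs, hy, rfl⟩ := hw
    have h : s • g y ∈ ℳ (n - i + i) := SetLike.GradedSMul.smul_mem hs (hg i y hy)
    rwa [sub_add_cancel] at h
  | zero => simp
  | add x y _ _ hx hy => rw [map_add]; exact add_mem hx hy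
  | neg x _ hx => rw [map_neg]; exact neg_mem hx

theorem piRight_tmul_single {κ A R : Type*} [CommSemiring A] [CommSemiring R] [Algebra A R]
    [Fintype κ] [DecidableEq κ] {Q : κ → Type*} [∀ i, AddCommMonoid (Q i)] [∀ i, Module A (Q i)]
    (x : R) (i : κ) (q : Q i) :
    piRight A R R Q (x ⊗ₜ Pi.single i q) = Pi.single i (x ⊗ₜ q) :=
  funext fun j ↦ Pi.apply_single _ (fun j ↦ TensorProduct.tmul_zero (Q j) x) i q j

variable {κ : Type*} {Q : κ → Type*} [∀ i, AddCommGroup (Q i)]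
  [∀ i, Module A (Q i)] {φ : ∀ i, Q i →ₗ[A] M} {d : κ → ι} {ℳ : ι → Submodule A M}

theorem lsum_mem_of_mem_piGrading [Fintype κ] [DecidableEq κ]
    (hφ : ∀ i q, φ i q ∈ ℳ (d i)) {n : ι} {y : ∀ i, Q i} (hy : y ∈ piGrading A Q d n) :
    LinearMap.lsum A Q ℕ φ y ∈ ℳ n := by
  rw [LinearMap.lsum_apply, LinearMap.sum_apply]
  refine sum_mem fun i _ ↦ ?_
  rw [LinearMap.comp_apply, LinearMap.proj_apply]
  by_cases hi : d i = n
  · exact hi ▸ hφ i (y i)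
  · rw [show y i = 0 from hy i hi, map_zero]
    exact zero_mem _

variable [CommRing R] [Algebra A R] [Algebra B R] [IsScalarTower A B R]

theorem exists_homogeneous_lift (hsurj : Function.Surjective (algebraMap A R)) {i : ι}
    {N : Type*} [AddCommGroup N] [Module A N] [Module.Projective A N]
    (E : R ⊗[A] N →ₗ[R] baseChangePiece B R ℳ i) :
    ∃ φ : N →ₗ[A] M, ∀ q, φ q ∈ ℳ i ∧ (1 : R) ⊗ₜ[B] φ q = (E (1 ⊗ₜ q) : R ⊗[B] M) := by
  let π : ℳ i →ₗ[A] baseChangePiece B R ℳ i :=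
    (pieceMap B R ℳ i).rangeRestrict.restrictScalars A ∘ₗ TensorProduct.mk A R (ℳ i) 1
  have hπ : Function.Surjective π :=
    (pieceMap B R ℳ i).surjective_rangeRestrict.comp (TensorProduct.mk_surjective A (ℳ i) R hsurj)
  obtain ⟨φ, hφ⟩ := Module.projective_lifting_property π
    (E.restrictScalars A ∘ₗ TensorProduct.mk A R N 1) hπ
  refine ⟨(ℳ i).subtype ∘ₗ φ, fun q ↦ ⟨(φ q).2, ?_⟩⟩
  have h : (π (φ q) : R ⊗[B] M) = E (1 ⊗ₜ q) := congrArg Subtype.val (LinearMap.congr_fun hφ q)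
  rw [← h]
  exact (pieceMap_one_tmul B R _).symm

theorem bijective_baseChange_liftBaseChange_lsum [Fintype κ] [DecidableEq κ]
    (hint : IsInternal fun i ↦ baseChangePiece B R ℳ (d i))
    (E : ∀ i, R ⊗[A] Q i ≃ₗ[R] baseChangePiece B R ℳ (d i))
    (hφE : ∀ i q, (1 : R) ⊗ₜ[B] φ i q = (E i (1 ⊗ₜ q) : R ⊗[B] M)) :
    Function.Bijective (((LinearMap.lsum A Q ℕ φ).liftBaseChange B).baseChange R) := by
  let cancel : R ⊗[B] (B ⊗[A] (∀ i, Q i)) ≃ₗ[R] R ⊗[A] (∀ i, Q i) :=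
    AlgebraTensorModule.cancelBaseChange A B R R _
  let coe : (⨁ i, baseChangePiece B R ℳ (d i)) ≃ₗ[R] R ⊗[B] M :=
    .ofBijective (DirectSum.coeLinearMap _) hint
  let Φ : R ⊗[A] (∀ i, Q i) ≃ₗ[R] R ⊗[B] M :=
    piRight A R R Q ≪≫ₗ .piCongrRight E ≪≫ₗ (linearEquivFunOnFintype R κ _).symm ≪≫ₗ coe
  have hΦ (i : κ) (q : Q i) : Φ (1 ⊗ₜ Pi.single i q) = E i (1 ⊗ₜ q) := by
    have hE : LinearEquiv.piCongrRight E (Pi.single i (1 ⊗ₜ q)) = Pi.single i (E i (1 ⊗ₜ q)) :=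
      funext fun j ↦ Pi.apply_single (fun j ↦ E j) (fun j ↦ map_zero (E j)) i (1 ⊗ₜ q) j
    simp only [Φ, LinearEquiv.trans_apply]
    rw [piRight_tmul_single, hE, linearEquivFunOnFintype_symm_single]
    exact coeLinearMap_lof _ i _
  have h : ((LinearMap.lsum A Q ℕ φ).liftBaseChange B).baseChange R =
      Φ.toLinearMap ∘ₗ cancel.toLinearMap := by
    ext i q
    simp [hΦ, cancel, hφE, -LinearMap.lsum_apply, LinearMap.lsum_piSingle]
  rw [h]
  exact Φ.bijective.comp cancel.bijective

variable [DecidableEq ι] [AddGroup ι] (𝒜 : ι → Submodule A B) [GradedAlgebra 𝒜]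
  [Decomposition ℳ] [SetLike.GradedSMul 𝒜 ℳ]

theorem exists_baseChange_equiv_of_equiv_baseChangePiece [Finite κ] [DecidableEq κ]
    [Module.Finite B M] [Module.Projective B M]
    (hsurj : Function.Surjective (algebraMap A R))
    (hunit : ∀ s ∈ RingHom.ker (algebraMap B R), IsUnit (1 - (decompose 𝒜 s 0 : B)))
    (hint : IsInternal fun i ↦ baseChangePiece B R ℳ (d i))
    [∀ i, Module.Finite A (Q i)] [∀ i, Module.Projective A (Q i)]
    (E : ∀ i, R ⊗[A] Q i ≃ₗ[R] baseChangePiece B R ℳ (d i)) :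
    ∃ e : B ⊗[A] (∀ i, Q i) ≃ₗ[B] M,
      ∀ n w, e w ∈ ℳ n ↔ w ∈ baseChangeGrading 𝒜 (piGrading A Q d) n := by
  have := Fintype.ofFinite κ
  choose φ hφ hφE using fun i ↦ exists_homogeneous_lift hsurj (E i).toLinearMap
  let _ := (isInternal_piGrading (A := A) (Q := Q) d).chooseDecomposition
  let _ := (isInternal_baseChangeGrading 𝒜 (piGrading A Q d)).chooseDecomposition
  let f : B ⊗[A] (∀ i, Q i) →ₗ[B] M := (LinearMap.lsum A Q ℕ φ).liftBaseChange B
  have hf (n : ι) (w) (hw : w ∈ baseChangeGrading 𝒜 (piGrading A Q d) n) : f w ∈ ℳ n :=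
    liftBaseChange_mem_of_mem_baseChangeGrading (Λ := piGrading A Q d)
      (fun _ _ hy ↦ lsum_mem_of_mem_piGrading (φ := φ) hφ hy) hw
  have hfR : Function.Bijective (f.baseChange R) :=
    bijective_baseChange_liftBaseChange_lsum hint E hφE
  have hsurj' : Function.Surjective (algebraMap B R) :=
    algebraMap_surjective_of_isScalarTower hsurj
  have hf_surj : Function.Surjective f :=
    surjective_of_baseChange_surjective 𝒜 ℳ (baseChangeGrading 𝒜 (piGrading A Q d)) hsurj' hunit
      hf hfR.2
  have hf_inj : Function.Injective f :=
    injective_of_baseChange_injective 𝒜 ℳ (baseChangeGrading 𝒜 (piGrading A Q d)) hsurj' hunit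
      hf hf_surj hfR.1
  exact ⟨.ofBijective f ⟨hf_inj, hf_surj⟩, fun n w ↦ map_mem_iff_of_injective hf hf_inj⟩

end Lifting

namespace Frame

open DirectSum TensorProduct

variable (F : Frame p S)

/-- The graded piece `Sₙ` of a frame as an `S₀`-submodule of `S`. -/
def piece (n : ℤ) : Submodule F.S0 S where
  __ := F.grade n
  smul_mem' a _ hx := zero_add n ▸ F.mul_mem a.2 hx

noncomputable instance piece.gradedAlgebra : GradedAlgebra F.piece where
  one_mem := F.one_mem
  mul_mem _ _ _ _ := F.mul_mem
  toDecomposition :=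
    have h : IsInternal F.piece := F.isInternal
    h.chooseDecomposition

section Negative

variable {F}

theorem t_pow_mem (n : ℕ) : F.t ^ n ∈ F.grade (-n) := by
  have h : F.t ^ n ∈ F.piece (n • (-1)) := SetLike.pow_mem_graded n F.t_mem
  rwa [smul_neg, nsmul_one] at h

theorem eq_τ_mul_t_pow {n : ℕ} (hn : 1 ≤ n) {x : S} (hx : x ∈ F.grade (-n)) :
    x = F.τ x * F.t ^ n := by
  refine (F.τ_bij n hn).injOn hx ?_ ?_
  · exact zero_add (-(n : ℤ)) ▸ F.mul_mem (F.τ_mem x) (t_pow_mem n)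
  · rw [map_mul, map_pow, F.τ_t, one_pow, mul_one, F.τ_id _ (F.τ_mem x)]

theorem exists_mul_eq_t_mul_of_one_le {n : ℕ} (hn : 1 ≤ n) {x y : S} (hx : x ∈ F.grade n)
    (hy : y ∈ F.grade (-n)) : ∃ z ∈ F.grade 1, x * y = F.t * z := by
  obtain ⟨k, rfl⟩ := Nat.exists_eq_add_of_le' hn
  refine ⟨F.τ y * (x * F.t ^ k), ?_, ?_⟩
  · have h := F.mul_mem (F.τ_mem y) (F.mul_mem hx (t_pow_mem k))
    rwa [Nat.cast_succ, zero_add, add_neg_cancel_comm] at h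
  · nth_rw 1 [eq_τ_mul_t_pow hn hy]
    ring

theorem exists_mul_eq_t_mul {n : ℤ} (hn : n ≠ 0) {x y : S} (hx : x ∈ F.grade n)
    (hy : y ∈ F.grade (-n)) : ∃ z ∈ F.grade 1, x * y = F.t * z := by
  obtain ⟨k, rfl | rfl⟩ := n.eq_nat_or_neg
  · exact exists_mul_eq_t_mul_of_one_le (by lia) hx hy
  · rw [neg_neg] at hy
    rw [mul_comm]
    exact exists_mul_eq_t_mul_of_one_le (by lia) hy hx

end Negative

section Rho

/-- The projection `S → S₀` onto the degree zero component. -/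
noncomputable def degreeZero : S →ₗ[F.S0] F.S0 where
  toFun s := ⟨decompose F.piece s 0, SetLike.coe_mem (decompose F.piece s 0)⟩
  map_add' s t := Subtype.ext (by simp)
  map_smul' a s := Subtype.ext (by rw [decompose_smul]; rfl)

variable {F}

theorem degreeZero_coe (a : F.S0) : F.degreeZero a = a :=
  Subtype.ext (decompose_of_mem_same F.piece a.2)

theorem degreeZero_of_mem {n : ℤ} (hn : n ≠ 0) {s : S} (hs : s ∈ F.piece n) :
    F.degreeZero s = 0 :=
  Subtype.ext (decompose_of_mem_ne F.piece hs hn)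

theorem degreeZero_mul_mem_tS1 {n : ℤ} (hn : n ≠ 0) {s : S} (hs : s ∈ F.piece n) (u : S) :
    F.degreeZero (s * u) ∈ F.tS1 := by
  induction u using Decomposition.inductionOn F.piece with
  | zero => simp
  | add u v hu hv => rw [mul_add, map_add]; exact add_mem hu hv
  | @homogeneous m u =>
    have hsu : s * u ∈ F.piece (n + m) := SetLike.mul_mem_graded hs u.2
    by_cases hm : n + m = 0
    · obtain rfl : m = -n := eq_neg_of_add_eq_zero_right hm
      obtain ⟨z, hz, hsuz⟩ := exists_mul_eq_t_mul hn hs u.2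
      rw [hm] at hsu
      refine ⟨z, hz, ?_⟩
      rw [← hsuz]
      exact decompose_of_mem_same F.piece hsu
    · rw [degreeZero_of_mem hm hsu]
      exact zero_mem _

theorem mk_degreeZero_mul (s u : S) :
    Ideal.Quotient.mk F.tS1 (F.degreeZero (s * u)) =
      Ideal.Quotient.mk F.tS1 (F.degreeZero s) * Ideal.Quotient.mk F.tS1 (F.degreeZero u) := by
  induction s using Decomposition.inductionOn F.piece with
  | zero => simp
  | add s t hs ht => rw [add_mul, map_add, map_add, hs, ht, map_add, map_add, add_mul]
  | @homogeneous n s =>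
    obtain rfl | hn := eq_or_ne n 0
    · let a : F.S0 := ⟨s, s.2⟩
      change Ideal.Quotient.mk F.tS1 (F.degreeZero (a • u)) =
        Ideal.Quotient.mk F.tS1 (F.degreeZero a) * _
      rw [map_smul, degreeZero_coe, smul_eq_mul, map_mul]
    · rw [degreeZero_of_mem hn s.2, map_zero, zero_mul]
      exact Ideal.Quotient.eq_zero_iff_mem.2 (degreeZero_mul_mem_tS1 hn s.2 u)

variable (F) in
/-- The ring homomorphism `ρ : S → R` which is the quotient map `S₀ → S₀ / tS₁` in degree zero and
vanishes in all other degrees. -/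
noncomputable def rho : S →ₐ[F.S0] F.R :=
  .ofLinearMap ((Ideal.Quotient.mkₐ F.S0 F.tS1).toLinearMap ∘ₗ F.degreeZero)
    (congrArg (Ideal.Quotient.mk F.tS1) (degreeZero_coe 1)) mk_degreeZero_mul

theorem rho_of_mem {n : ℤ} (hn : n ≠ 0) {s : S} (hs : s ∈ F.piece n) : F.rho s = 0 :=
  congrArg (Ideal.Quotient.mk F.tS1) (degreeZero_of_mem hn hs)

end Rho

section Jacobson

theorem natCast_mem_jacobson_bot : (p : F.S0) ∈ (⊥ : Ideal F.S0).jacobson := by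
  refine Ideal.mem_jacobson_bot.2 fun x ↦ ?_
  obtain ⟨y, hy, hxy⟩ := F.p_jac (-x) (neg_mem x.2)
  refine .of_mul_eq_one (⟨y, hy⟩ : F.S0) (Subtype.ext ?_)
  push_cast
  linear_combination hxy

theorem tS1_le_jacobson_bot : F.tS1 ≤ (⊥ : Ideal F.S0).jacobson := by
  rintro a ⟨x, -, hax⟩
  obtain ⟨c, hc, hσ⟩ := F.σ_frob a a.2
  -- `p σ(x) = σ(t x) ≡ aᵖ` modulo `p`, so `p` divides `aᵖ`.
  have hpow : a ^ p = (p : F.S0) * (⟨F.σ x, F.σ_mem x⟩ - ⟨c, hc⟩) := by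
    refine Subtype.ext ?_
    rw [hax, map_mul, F.σ_t, ← hax] at hσ
    push_cast
    linear_combination -hσ
  refine Ideal.isRadical_jacobson ⊥ ⟨p, ?_⟩
  rw [hpow]
  exact Ideal.mul_mem_right _ _ F.natCast_mem_jacobson_bot

variable {F} in
theorem isUnit_one_sub_decompose_of_rho_eq_zero {s : S} (hs : F.rho s = 0) :
    IsUnit (1 - (decompose F.piece s 0 : S)) := by
  have hmem : F.degreeZero s ∈ F.tS1 := Ideal.Quotient.eq_zero_iff_mem.1 hs
  have h := Ideal.mem_jacobson_bot.1 (F.tS1_le_jacobson_bot hmem) (-1)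
  rw [mul_neg_one, neg_add_eq_sub] at h
  exact h.map F.S0.subtype

end Jacobson

section StandardProjective

noncomputable instance rho.algebra : Algebra S F.R :=
  F.rho.toRingHom.toAlgebra

instance rho.isScalarTower : IsScalarTower F.S0 S F.R :=
  .of_algebraMap_eq' F.rho.comp_algebraMap.symm

variable {M : Type} [AddCommGroup M] [Module S M]

variable {F} in
theorem nonempty_standardProjectiveWitness_of_equiv {ℳ : ℤ → AddSubgroup M} {κ : Type} [Finite κ]
    {Q : κ → Type} [∀ i, AddCommGroup (Q i)] [∀ i, Module F.S0 (Q i)]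
    [∀ i, Module.Finite F.S0 (Q i)] [∀ i, Module.Projective F.S0 (Q i)] {d : κ → ℤ}
    (e : S ⊗[F.S0] (∀ i, Q i) ≃ₗ[S] M)
    (he : ∀ n w, e w ∈ ℳ n ↔ w ∈ baseChangeGrading F.piece (piGrading F.S0 Q d) n) :
    Nonempty (F.StandardProjectiveWitness M ℳ) := by
  classical
  have := Fintype.ofFinite κ
  exact ⟨{
    L := ∀ i, Q i
    Λ := piGrading F.S0 Q d
    internal := isInternal_piGrading d
    finiteSupport := finite_setOf_piGrading_ne_bot d
    finite := inferInstance
    projective := .of_equiv' (DFinsupp.linearEquivFunOnFintype (R := F.S0) (M := Q))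
    equiv := e
    graded n x := by
      have h := he n (e.symm x)
      rwa [e.apply_symm_apply] at h }⟩

theorem nonempty_standardProjectiveWitness
    (hlift : ∀ (P : Type) [AddCommGroup P] [Module F.R P],
      Module.Finite F.R P → Module.Projective F.R P → Nonempty (F.LiftWitness P))
    (ℳ : ℤ → Submodule F.S0 M) [Decomposition ℳ] [SetLike.GradedSMul F.piece ℳ]
    [Module.Finite S M] [Module.Projective S M] :
    Nonempty (F.StandardProjectiveWitness M fun n ↦ (ℳ n).toAddSubgroup) := by
  have hsurj : Function.Surjective (algebraMap F.S0 F.R) := Ideal.Quotient.mk_surjective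
  have hint : IsInternal (baseChangePiece S F.R ℳ) :=
    isInternal_baseChangePiece F.piece ℳ hsurj fun _ hn _ hs ↦ rho_of_mem hn hs
  obtain ⟨D, hD⟩ := exists_finset_isInternal hint
  have W (i : D) : F.LiftWitness (baseChangePiece S F.R ℳ i) :=
    (hlift _ (finite_of_isInternal hint i) (projective_of_isInternal hint i)).some
  have (i : D) : Module.Finite F.S0 (W i).Q := (W i).finite
  have (i : D) : Module.Projective F.S0 (W i).Q := (W i).projective
  obtain ⟨e, he⟩ := exists_baseChange_equiv_of_equiv_baseChangePiece F.piece hsurj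
    (fun _ hs ↦ isUnit_one_sub_decompose_of_rho_eq_zero hs) hD fun i ↦ (W i).equiv
  exact nonempty_standardProjectiveWitness_of_equiv e he

/-- The pieces of a graded `S`-module, given as additive subgroups, viewed as `S₀`-submodules. -/
def modulePiece (ℳ : ℤ → AddSubgroup M)
    (hsmul : ∀ {m n : ℤ} {a : S} {x : M}, a ∈ F.grade m → x ∈ ℳ n → a • x ∈ ℳ (m + n))
    (n : ℤ) : Submodule F.S0 M where
  __ := ℳ n
  smul_mem' a _ hx := zero_add n ▸ hsmul a.2 hx

end StandardProjective

end Frame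

theorem frame_finite_projective_graded_is_standard_general (p : ℕ)
    {S : Type} [CommRing S] (F : Frame p S)
    (hlift : ∀ (P : Type) [AddCommGroup P] [Module F.R P],
      Module.Finite F.R P → Module.Projective F.R P → Nonempty (F.LiftWitness P))
    {M : Type} [AddCommGroup M] [Module S M]
    (ℳ : ℤ → AddSubgroup M)
    (hsmul : ∀ {m n : ℤ} {a : S} {x : M}, a ∈ F.grade m → x ∈ ℳ n → a • x ∈ ℳ (m + n))
    (hinternal : DirectSum.IsInternal ℳ)
    (hfin : Module.Finite S M)
    (hproj : Module.Projective S M) :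
    Nonempty (F.StandardProjectiveWitness M ℳ) := by
  let _ : DirectSum.Decomposition (F.modulePiece ℳ hsmul) :=
    have h : DirectSum.IsInternal (F.modulePiece ℳ hsmul) := hinternal
    h.chooseDecomposition
  have : SetLike.GradedSMul F.piece (F.modulePiece ℳ hsmul) := ⟨fun _ _ _ _ ha hx ↦ hsmul ha hx⟩
  exact F.nonempty_standardProjectiveWitness hlift (F.modulePiece ℳ hsmul)

/-- Let `(S, σ, τ)` be a frame for `R` such that every finitely generated
projective `R`-module lifts to `S₀` (is isomorphic to `Q ⊗_{S₀} R` for some finitely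
generated projective `S₀`-module `Q`).  Then every graded `S`-module `M` which is finitely
generated and projective as an `S`-module is standard projective. -/
theorem frame_finite_projective_graded_is_standard (p : ℕ) (hp : p.Prime)
    {S : Type} [CommRing S] (F : Frame p S)
    (hlift : ∀ (P : Type) [AddCommGroup P] [Module F.R P],
      Module.Finite F.R P → Module.Projective F.R P → Nonempty (F.LiftWitness P))
    {M : Type} [AddCommGroup M] [Module S M]
    (ℳ : ℤ → AddSubgroup M)
    (hsmul : ∀ {m n : ℤ} {a : S} {x : M}, a ∈ F.grade m → x ∈ ℳ n → a • x ∈ ℳ (m + n))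
    (hinternal : DirectSum.IsInternal ℳ)
    (hfin : Module.Finite S M)
    (hproj : Module.Projective S M) :
    Nonempty (F.StandardProjectiveWitness M ℳ) :=
  frame_finite_projective_graded_is_standard_general p F hlift ℳ hsmul hinternal hfin hproj
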